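/- Let α ∈ (1,2) and ρ ∈ (0,1) with ρ̂ := 1 - ρ, and assume αρ > 0 and αρ̂ > 0. Then the function u ↦ u^{1-α} (u-1)^{αρ-1} (u+1)^{αρ̂-1} - (α-1) u^{-α} Φ̄(u) is integrable on (1, ∞) and (α-1) ∫₁^∞ [ u^{1-α} (u-1)^{αρ-1} (u+1)^{αρ̂-1} - (α-1) u^{-α} Φ̄(u) ] du = 1. -/

import Mathlib

open MeasureTheory Real Set

/-- `Φ̄(z) := ∫₁^z (t-1)^{αρ-1} (t+1)^{αρ̂-1} dt`, with `ρ̂ = 1 - ρ`. -/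
noncomputable def PhiBar (α ρ : ℝ) (z : ℝ) : ℝ :=
  ∫ t in Ioc (1:ℝ) z, (t - 1) ^ (α * ρ - 1) * (t + 1) ^ (α * (1 - ρ) - 1)

/-!
With `p = α - 1` and `f t = (t - 1) ^ (αρ - 1) * (t + 1) ^ (αρ̂ - 1)`, the integrand is formally the
derivative of `u ^ (-p) * ∫₁ᵘ f`, and it depends linearly on `f`. For `f t = t ^ (p - 1)` it equals
`u ^ (-p - 1)`, whose integral is `1 / p`. The remainder `h t = f t - t ^ (p - 1)` is
`O(t ^ (p - 2))` at infinity, so `t ^ (-p) * h t` is integrable; by Fubini on the triangle `t ≤ u`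
the two terms coming from `h` are then separately integrable with equal integrals, so they cancel.
-/

open Filter Asymptotics

section Triangle

variable {X E : Type*} [LinearOrder X] [TopologicalSpace X] [OrderClosedTopology X]
  [MeasurableSpace X] [OpensMeasurableSpace X]
  [NormedAddCommGroup E] [NormedSpace ℝ E] {μ : Measure X} {g : X → ℝ} {h : X → E}

lemma integral_indicator_le_smul_snd (u : X) :
    ∫ t, {q : X × X | q.2 ≤ q.1}.indicator (fun q ↦ g q.1 • h q.2) (u, t) ∂μ =
      g u • ∫ t in Iic u, h t ∂μ := by
  change ∫ t, (Iic u).indicator (fun t ↦ g u • h t) t ∂μ = _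
  rw [integral_indicator measurableSet_Iic, integral_smul]

lemma integral_indicator_le_smul_fst [CompleteSpace E] (t : X) :
    ∫ u, {q : X × X | q.2 ≤ q.1}.indicator (fun q ↦ g q.1 • h q.2) (u, t) ∂μ =
      (∫ u in Ici t, g u ∂μ) • h t := by
  change ∫ u, (Ici t).indicator (fun u ↦ g u • h t) u ∂μ = _
  rw [integral_indicator measurableSet_Ici, integral_smul_const]

variable [SecondCountableTopology X] [SFinite μ]

lemma integrable_prod_indicator_le_smul (hg : Integrable g μ) (hh : AEStronglyMeasurable h μ)
    (hgh : Integrable (fun t ↦ (∫ u in Ici t, ‖g u‖ ∂μ) * ‖h t‖) μ) :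
    Integrable ({q : X × X | q.2 ≤ q.1}.indicator fun q ↦ g q.1 • h q.2) (μ.prod μ) := by
  have hmeas := (hg.aestronglyMeasurable.comp_fst.smul hh.comp_snd).indicator
    (measurableSet_le measurable_snd measurable_fst : MeasurableSet {q : X × X | q.2 ≤ q.1})
  refine (integrable_prod_iff' hmeas).2 ⟨.of_forall fun t ↦ ?_, hgh.congr (.of_forall fun t ↦ ?_)⟩
  · exact (hg.smul_const (h t)).indicator (measurableSet_Ici (a := t))
  · change _ = ∫ u, ‖(Ici t).indicator (fun u ↦ g u • h t) u‖ ∂μ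
    simp only [norm_indicator_eq_indicator_norm, integral_indicator measurableSet_Ici, norm_smul,
      integral_mul_const]

lemma integrable_smul_setIntegral_Iic (hg : Integrable g μ) (hh : AEStronglyMeasurable h μ)
    (hgh : Integrable (fun t ↦ (∫ u in Ici t, ‖g u‖ ∂μ) * ‖h t‖) μ) :
    Integrable (fun u ↦ g u • ∫ t in Iic u, h t ∂μ) μ := by
  simpa only [integral_indicator_le_smul_snd] using
    (integrable_prod_indicator_le_smul hg hh hgh).integral_prod_left

lemma integral_smul_setIntegral_Iic [CompleteSpace E] (hg : Integrable g μ)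
    (hh : AEStronglyMeasurable h μ)
    (hgh : Integrable (fun t ↦ (∫ u in Ici t, ‖g u‖ ∂μ) * ‖h t‖) μ) :
    ∫ u, g u • ∫ t in Iic u, h t ∂μ ∂μ = ∫ t, (∫ u in Ici t, g u ∂μ) • h t ∂μ := by
  simpa only [integral_indicator_le_smul_snd, integral_indicator_le_smul_fst] using
    integral_integral_swap (f := fun u t ↦
      {q : X × X | q.2 ≤ q.1}.indicator (fun q ↦ g q.1 • h q.2) (u, t))
      (integrable_prod_indicator_le_smul hg hh hgh)

end Triangle

/-- The derivative of `u ↦ u ^ (-p) * ∫ t in Ioc c u, f t`, written out by the product rule so that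
it makes sense without regularity of `f`. -/
noncomputable def scaledPrimitiveDeriv (p c : ℝ) (f : ℝ → ℝ) (u : ℝ) : ℝ :=
  u ^ (-p) * f u - p * u ^ (-p - 1) * ∫ t in Ioc c u, f t

section ScaledPrimitive

variable {p c : ℝ} {f g : ℝ → ℝ}

lemma integrableOn_Ioi_mul_rpow_neg_sub_one (hp : 0 < p) (hc : 0 < c) :
    IntegrableOn (fun u ↦ p * u ^ (-p - 1)) (Ioi c) :=
  (integrableOn_Ioi_rpow_of_lt (by linarith) hc).const_mul p

lemma integral_Ioi_mul_rpow_neg_sub_one (hp : 0 < p) (hc : 0 < c) :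
    ∫ u in Ioi c, p * u ^ (-p - 1) = c ^ (-p) := by
  rw [integral_const_mul, integral_Ioi_rpow_of_lt (by linarith) hc, sub_add_cancel]
  field

lemma setIntegral_Ici_restrict_Ioi_mul_rpow_neg_sub_one (hp : 0 < p) (hc : 0 < c) {t : ℝ}
    (ht : c < t) : ∫ u in Ici t, p * u ^ (-p - 1) ∂volume.restrict (Ioi c) = t ^ (-p) := by
  rw [Measure.restrict_restrict measurableSet_Ici, inter_eq_left.2 (Ici_subset_Ioi.2 ht),
    integral_Ici_eq_integral_Ioi, integral_Ioi_mul_rpow_neg_sub_one hp (hc.trans ht)]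

lemma setIntegral_Ici_restrict_Ioi_norm_mul_rpow_neg_sub_one (hp : 0 < p) (hc : 0 < c) {t : ℝ}
    (ht : c < t) : ∫ u in Ici t, ‖p * u ^ (-p - 1)‖ ∂volume.restrict (Ioi c) = t ^ (-p) := by
  rw [← setIntegral_Ici_restrict_Ioi_mul_rpow_neg_sub_one hp hc ht]
  refine setIntegral_congr_fun measurableSet_Ici fun u hu ↦ norm_of_nonneg ?_
  have hu0 : 0 < u := hc.trans (ht.trans_le hu)
  positivity

lemma locallyIntegrableOn_of_rpow_mul (hc : 0 < c)
    (hf : IntegrableOn (fun t ↦ t ^ (-p) * f t) (Ioi c)) : LocallyIntegrableOn f (Ici c) := by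
  have hpow : ContinuousOn (fun t : ℝ ↦ t ^ p) (Ici c) :=
    continuousOn_id.rpow_const fun t ht ↦ .inl (hc.trans_le ht).ne'
  have hf_Ici := integrableOn_Ici_iff_integrableOn_Ioi (by finiteness) |>.2 hf
  refine (hf_Ici.locallyIntegrableOn.continuousOn_mul hpow isClosed_Ici.isLocallyClosed).congr ?_
  filter_upwards [ae_restrict_mem measurableSet_Ici] with t ht
  rw [rpow_neg (hc.trans_le ht).le, mul_inv_cancel_left₀ (rpow_pos_of_pos (hc.trans_le ht) p).ne']

lemma integrableOn_setIntegral_norm_rpow_mul_norm (hp : 0 < p) (hc : 0 < c)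
    (hf : IntegrableOn (fun t ↦ t ^ (-p) * f t) (Ioi c)) :
    IntegrableOn
      (fun t ↦ (∫ u in Ici t, ‖p * u ^ (-p - 1)‖ ∂volume.restrict (Ioi c)) * ‖f t‖) (Ioi c) := by
  refine IntegrableOn.congr_fun hf.norm (fun t (ht : c < t) ↦ ?_) measurableSet_Ioi
  rw [setIntegral_Ici_restrict_Ioi_norm_mul_rpow_neg_sub_one hp hc ht, norm_mul,
    norm_of_nonneg (rpow_nonneg (hc.trans ht).le _)]

lemma setIntegral_Iic_restrict_Ioi (u : ℝ) :
    ∫ t in Iic u, f t ∂volume.restrict (Ioi c) = ∫ t in Ioc c u, f t := by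
  rw [Measure.restrict_restrict measurableSet_Iic, Iic_inter_Ioi]

lemma integrableOn_rpow_mul_setIntegral_Ioc (hp : 0 < p) (hc : 0 < c)
    (hf : IntegrableOn (fun t ↦ t ^ (-p) * f t) (Ioi c)) :
    IntegrableOn (fun u ↦ p * u ^ (-p - 1) * ∫ t in Ioc c u, f t) (Ioi c) := by
  have hmeas := (locallyIntegrableOn_of_rpow_mul hc hf).aestronglyMeasurable.mono_set
    Ioi_subset_Ici_self
  simpa only [smul_eq_mul, setIntegral_Iic_restrict_Ioi, IntegrableOn] using
    integrable_smul_setIntegral_Iic (integrableOn_Ioi_mul_rpow_neg_sub_one hp hc) hmeas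
      (integrableOn_setIntegral_norm_rpow_mul_norm hp hc hf)

lemma integral_rpow_mul_setIntegral_Ioc (hp : 0 < p) (hc : 0 < c)
    (hf : IntegrableOn (fun t ↦ t ^ (-p) * f t) (Ioi c)) :
    ∫ u in Ioi c, p * u ^ (-p - 1) * ∫ t in Ioc c u, f t = ∫ t in Ioi c, t ^ (-p) * f t := by
  have hmeas := (locallyIntegrableOn_of_rpow_mul hc hf).aestronglyMeasurable.mono_set
    Ioi_subset_Ici_self
  have hswap := integral_smul_setIntegral_Iic (integrableOn_Ioi_mul_rpow_neg_sub_one hp hc) hmeas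
    (integrableOn_setIntegral_norm_rpow_mul_norm hp hc hf)
  simp only [smul_eq_mul, setIntegral_Iic_restrict_Ioi] at hswap
  rw [hswap]
  refine setIntegral_congr_fun measurableSet_Ioi fun t ht ↦ ?_
  simp only [setIntegral_Ici_restrict_Ioi_mul_rpow_neg_sub_one hp hc ht]

lemma integrableOn_scaledPrimitiveDeriv (hp : 0 < p) (hc : 0 < c)
    (hf : IntegrableOn (fun t ↦ t ^ (-p) * f t) (Ioi c)) :
    IntegrableOn (scaledPrimitiveDeriv p c f) (Ioi c) :=
  hf.sub (integrableOn_rpow_mul_setIntegral_Ioc hp hc hf)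

lemma integral_scaledPrimitiveDeriv_eq_zero (hp : 0 < p) (hc : 0 < c)
    (hf : IntegrableOn (fun t ↦ t ^ (-p) * f t) (Ioi c)) :
    ∫ u in Ioi c, scaledPrimitiveDeriv p c f u = 0 := by
  simp only [scaledPrimitiveDeriv]
  rw [integral_sub hf (integrableOn_rpow_mul_setIntegral_Ioc hp hc hf),
    integral_rpow_mul_setIntegral_Ioc hp hc hf, sub_self]

lemma scaledPrimitiveDeriv_add {u : ℝ} (hf : IntegrableOn f (Ioc c u))
    (hg : IntegrableOn g (Ioc c u)) :
    scaledPrimitiveDeriv p c (f + g) u =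
      scaledPrimitiveDeriv p c f u + scaledPrimitiveDeriv p c g u := by
  simp only [scaledPrimitiveDeriv, Pi.add_apply, integral_add hf hg]
  ring

lemma scaledPrimitiveDeriv_const_mul (a u : ℝ) :
    scaledPrimitiveDeriv p c (fun t ↦ a * f t) u = a * scaledPrimitiveDeriv p c f u := by
  simp only [scaledPrimitiveDeriv, integral_const_mul]
  ring

lemma scaledPrimitiveDeriv_rpow_sub_one (hp : 0 < p) (hc : 0 < c) {u : ℝ} (hu : c ≤ u) :
    scaledPrimitiveDeriv p c (fun t ↦ t ^ (p - 1)) u = c ^ p * u ^ (-p - 1) := by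
  have hu0 : 0 < u := hc.trans_le hu
  have hint : ∫ t in Ioc c u, t ^ (p - 1) = (u ^ p - c ^ p) / p := by
    rw [← intervalIntegral.integral_of_le hu, integral_rpow (.inl (by linarith)), sub_add_cancel]
  have hpow : u ^ (-p) * u ^ (p - 1) = u ^ (-p - 1) * u ^ p := by
    rw [← rpow_add hu0, ← rpow_add hu0]
    ring_nf
  rw [scaledPrimitiveDeriv, hint, hpow]
  field

variable {L : ℝ}

lemma scaledPrimitiveDeriv_eq_add_sub_rpow (hp : 0 < p) (hc : 0 < c)
    (hf : IntegrableOn (fun t ↦ t ^ (-p) * (f t - L * t ^ (p - 1))) (Ioi c)) {u : ℝ}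
    (hu : c ≤ u) :
    scaledPrimitiveDeriv p c f u = L * c ^ p * u ^ (-p - 1) +
      scaledPrimitiveDeriv p c (fun t ↦ f t - L * t ^ (p - 1)) u := by
  have hpow : IntegrableOn (fun t ↦ L * t ^ (p - 1)) (Ioc c u) :=
    ((intervalIntegral.intervalIntegrable_rpow' (by linarith)).1).const_mul L
  have hrem : IntegrableOn (fun t ↦ f t - L * t ^ (p - 1)) (Ioc c u) :=
    ((locallyIntegrableOn_of_rpow_mul hc hf).integrableOn_compact_subset Icc_subset_Ici_self
      isCompact_Icc).mono_set Ioc_subset_Icc_self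
  rw [mul_assoc, ← scaledPrimitiveDeriv_rpow_sub_one hp hc hu, ← scaledPrimitiveDeriv_const_mul,
    ← scaledPrimitiveDeriv_add hpow hrem]
  congr 1
  ext t
  simp

lemma integrableOn_scaledPrimitiveDeriv_of_sub_rpow (hp : 0 < p) (hc : 0 < c)
    (hf : IntegrableOn (fun t ↦ t ^ (-p) * (f t - L * t ^ (p - 1))) (Ioi c)) :
    IntegrableOn (scaledPrimitiveDeriv p c f) (Ioi c) := by
  have hpow : IntegrableOn (fun u ↦ L * c ^ p * u ^ (-p - 1)) (Ioi c) :=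
    (integrableOn_Ioi_rpow_of_lt (by linarith) hc).const_mul _
  exact (hpow.add (integrableOn_scaledPrimitiveDeriv hp hc hf)).congr_fun
    (fun u hu ↦ (scaledPrimitiveDeriv_eq_add_sub_rpow hp hc hf (le_of_lt hu)).symm)
    measurableSet_Ioi

lemma integral_scaledPrimitiveDeriv_of_sub_rpow (hp : 0 < p) (hc : 0 < c)
    (hf : IntegrableOn (fun t ↦ t ^ (-p) * (f t - L * t ^ (p - 1))) (Ioi c)) :
    p * ∫ u in Ioi c, scaledPrimitiveDeriv p c f u = L := by
  have hpow : IntegrableOn (fun u ↦ L * c ^ p * u ^ (-p - 1)) (Ioi c) :=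
    (integrableOn_Ioi_rpow_of_lt (by linarith) hc).const_mul _
  rw [setIntegral_congr_fun measurableSet_Ioi fun u hu ↦
      scaledPrimitiveDeriv_eq_add_sub_rpow hp hc hf (le_of_lt hu),
    integral_add hpow (integrableOn_scaledPrimitiveDeriv hp hc hf),
    integral_scaledPrimitiveDeriv_eq_zero hp hc hf, add_zero, integral_const_mul,
    mul_left_comm, ← integral_const_mul, integral_Ioi_mul_rpow_neg_sub_one hp hc, mul_assoc,
    ← rpow_add hc, add_neg_cancel, rpow_zero, mul_one]

end ScaledPrimitive

section ShiftedPowers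

-- In `s = t⁻¹` this is differentiability of `(1 - x * s) ^ m * (1 - y * s) ^ n` at `0`.
lemma isBigO_sub_rpow_mul_sub_rpow_remainder (x y m n : ℝ) :
    (fun t : ℝ ↦ (t - x) ^ m * (t - y) ^ n - t ^ (m + n)) =O[atTop]
      fun t ↦ t ^ (m + n - 1) := by
  have hdiff : DifferentiableAt ℝ (fun s : ℝ ↦ (1 - x * s) ^ m * (1 - y * s) ^ n) 0 :=
    .mul (.rpow_const (by fun_prop) (.inl (by simp))) (.rpow_const (by fun_prop) (.inl (by simp)))
  have hscaled := (isBigO_refl (fun t : ℝ ↦ t ^ (m + n)) atTop).mul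
    (hdiff.isBigO_sub.comp_tendsto tendsto_inv_atTop_zero)
  refine hscaled.congr' ?_ ?_
  · filter_upwards [eventually_gt_atTop 0, eventually_ge_atTop x, eventually_ge_atTop y]
      with t ht hx hy
    have hfactor (z : ℝ) (hz : z ≤ t) (k : ℝ) : (t - z) ^ k = t ^ k * (1 - z * t⁻¹) ^ k := by
      rw [← mul_rpow ht.le (by rw [← div_eq_mul_inv]; linarith [(div_le_one ht).2 hz])]
      field_simp
    simp only [Function.comp_apply, hfactor x hx, hfactor y hy, rpow_add ht, mul_zero, sub_zero,
      one_rpow]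
    ring
  · filter_upwards [eventually_gt_atTop 0] with t ht
    simp only [Function.comp_apply, sub_zero, rpow_sub_one ht.ne', div_eq_mul_inv]

variable {x y m n : ℝ}

lemma locallyIntegrable_sub_rpow (x : ℝ) (hm : -1 < m) :
    LocallyIntegrable fun t : ℝ ↦ (t - x) ^ m := by
  intro z
  have hint : IntervalIntegrable (fun t : ℝ ↦ (t - x) ^ m) volume (z - 1) (z + 1) := by
    simpa using (intervalIntegral.intervalIntegrable_rpow' (a := z - 1 - x) (b := z + 1 - x)
      hm).comp_sub_right x
  exact ⟨Ioc (z - 1) (z + 1), Ioc_mem_nhds (by linarith) (by linarith), hint.1⟩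

lemma integrableOn_sub_rpow_mul_sub_rpow_remainder (hx : 0 < x) (hyx : y < x)
    (hm : -1 < m) :
    IntegrableOn (fun t : ℝ ↦ t ^ (-(m + n + 1)) * ((t - x) ^ m * (t - y) ^ n - t ^ (m + n)))
      (Ioi x) := by
  have hpow (k : ℝ) : ContinuousOn (fun t : ℝ ↦ t ^ k) (Ici x) :=
    continuousOn_id.rpow_const fun t ht ↦ .inl (hx.trans_le ht).ne'
  have hpow_y : ContinuousOn (fun t ↦ (t - y) ^ n) (Ici x) :=
    (continuousOn_id.sub continuousOn_const).rpow_const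
      fun t ht ↦ .inl (sub_pos.2 (hyx.trans_le ht)).ne'
  have hloc : LocallyIntegrableOn
      (fun t : ℝ ↦ t ^ (-(m + n + 1)) * ((t - x) ^ m * (t - y) ^ n - t ^ (m + n))) (Ici x) :=
    (((locallyIntegrable_sub_rpow x hm).locallyIntegrableOn _ |>.mul_continuousOn hpow_y
      isClosed_Ici.isLocallyClosed).sub ((hpow _).locallyIntegrableOn measurableSet_Ici)
      ).continuousOn_mul (hpow _) isClosed_Ici.isLocallyClosed
  have hdecay : (fun t : ℝ ↦ t ^ (-(m + n + 1)) * ((t - x) ^ m * (t - y) ^ n - t ^ (m + n)))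
      =O[atTop] fun t ↦ t ^ (-2 : ℝ) := by
    refine ((isBigO_refl _ atTop).mul (isBigO_sub_rpow_mul_sub_rpow_remainder x y m n)).congr'
      .rfl ?_
    filter_upwards [eventually_gt_atTop 0] with t ht
    rw [← rpow_add ht]
    ring_nf
  exact (hloc.integrableOn_of_isBigO_atTop hdecay
    ⟨Ioi 1, Ioi_mem_atTop 1, integrableOn_Ioi_rpow_of_lt (by norm_num) one_pos⟩).mono_set
    Ioi_subset_Ici_self

end ShiftedPowers

lemma scaledPrimitiveDeriv_eq_PhiBar (α ρ u : ℝ) :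
    scaledPrimitiveDeriv (α - 1) 1
        (fun t ↦ (t - 1) ^ (α * ρ - 1) * (t + 1) ^ (α * (1 - ρ) - 1)) u =
      u ^ (1 - α) * (u - 1) ^ (α * ρ - 1) * (u + 1) ^ (α * (1 - ρ) - 1)
        - (α - 1) * u ^ (-α) * PhiBar α ρ u := by
  rw [scaledPrimitiveDeriv, PhiBar, neg_sub, sub_sub_cancel_left, mul_assoc (u ^ (1 - α))]

theorem stmt_6_general (α ρ : ℝ) (hα : 1 < α) (hρ : 0 < ρ) :
    IntegrableOn
      (fun u : ℝ => u ^ (1 - α) * (u - 1) ^ (α * ρ - 1) * (u + 1) ^ (α * (1 - ρ) - 1)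
        - (α - 1) * u ^ (-α) * PhiBar α ρ u) (Ioi (1:ℝ)) ∧
    (α - 1) *
      (∫ u in Ioi (1:ℝ),
        (u ^ (1 - α) * (u - 1) ^ (α * ρ - 1) * (u + 1) ^ (α * (1 - ρ) - 1)
          - (α - 1) * u ^ (-α) * PhiBar α ρ u)) = 1 := by
  have hp : 0 < α - 1 := sub_pos.2 hα
  have hm : -1 < α * ρ - 1 := by linarith [mul_pos (one_pos.trans hα) hρ]
  have hrem : IntegrableOn (fun t : ℝ ↦ t ^ (-(α - 1)) *
      ((t - 1) ^ (α * ρ - 1) * (t + 1) ^ (α * (1 - ρ) - 1) - 1 * t ^ (α - 1 - 1))) (Ioi 1) := by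
    have hexp : α * ρ - 1 + (α * (1 - ρ) - 1) = α - 1 - 1 := by ring
    simpa only [hexp, sub_add_cancel, sub_neg_eq_add, one_mul] using
      integrableOn_sub_rpow_mul_sub_rpow_remainder (x := 1) (y := -1) (n := α * (1 - ρ) - 1)
        one_pos (by norm_num) hm
  simp only [← scaledPrimitiveDeriv_eq_PhiBar]
  exact ⟨integrableOn_scaledPrimitiveDeriv_of_sub_rpow hp one_pos hrem,
    integral_scaledPrimitiveDeriv_of_sub_rpow hp one_pos hrem⟩

theorem stmt_6 (α ρ : ℝ) (hα : α ∈ Ioo (1:ℝ) 2) (hρ : ρ ∈ Ioo (0:ℝ) 1)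
    (hαρ : 0 < α * ρ) (hαρ' : 0 < α * (1 - ρ)) :
    IntegrableOn
      (fun u : ℝ => u ^ (1 - α) * (u - 1) ^ (α * ρ - 1) * (u + 1) ^ (α * (1 - ρ) - 1)
        - (α - 1) * u ^ (-α) * PhiBar α ρ u) (Ioi (1:ℝ)) ∧
    (α - 1) *
      (∫ u in Ioi (1:ℝ),
        (u ^ (1 - α) * (u - 1) ^ (α * ρ - 1) * (u + 1) ^ (α * (1 - ρ) - 1)
          - (α - 1) * u ^ (-α) * PhiBar α ρ u)) = 1 :=
  stmt_6_general α ρ hα.1 hρ.1
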